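/- For every ψ ∈ 𝒜(I_π) it holds λ₁(I_π, 2ψ²) ≥ 2, with equality if and only if ψ(x) = tan x; in the equality case an eigenfunction is cos²x. -/

import Mathlib

open MeasureTheory Real Set Filter
open scoped ENNReal

noncomputable section

/-- Test class for the Dirichlet eigenvalue with measure potential on `(a,b)`:
`C¹` functions vanishing outside the open interval (a core of `H¹₀`). -/
def TestFun (a b : ℝ) (v : ℝ → ℝ) : Prop :=
  ContDiff ℝ 1 v ∧ ∀ x ∉ Ioo a b, v x = 0

/-- Rayleigh quotient for the Dirichlet eigenvalue with (nonnegative, possibly infinite)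
measure potential `q` on the interval `(a,b)`. -/
def dirRQ (a b : ℝ) (q : Measure ℝ) (v : ℝ → ℝ) : ℝ≥0∞ :=
  ((∫⁻ x in Ioo a b, ENNReal.ofReal ((deriv v x) ^ 2)) +
      ∫⁻ x in Ioo a b, ENNReal.ofReal ((v x) ^ 2) ∂q) /
    ∫⁻ x in Ioo a b, ENNReal.ofReal ((v x) ^ 2)

/-- `λ₁((a,b), q)`, the first Dirichlet eigenvalue with measure potential `q`. -/
def lam1 (a b : ℝ) (q : Measure ℝ) : ℝ≥0∞ :=
  ⨅ (v : ℝ → ℝ)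
    (_ : TestFun a b v ∧ (∫⁻ x in Ioo a b, ENNReal.ofReal ((v x) ^ 2)) ≠ 0),
    dirRQ a b q v

/-- The class `𝒜(I_π)`: an increasing function `psi` with finiteness domain `dom ⊆ I_π`
(an interval), satisfying the improved-monotonicity gap condition, together with the
measure `nu` representing its distributional derivative `ψ'` on `dom`. -/
structure PsiA where
  dom : Set ℝ
  domSub : dom ⊆ Ioo (-(π / 2)) (π / 2)
  domConn : dom.OrdConnected
  psi : ℝ → ℝ
  mono : MonotoneOn psi dom
  gap : ∀ ⦃x⦄, x ∈ dom → ∀ ⦃y⦄, y ∈ dom → x < y →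
    2 * tan ((y - x) / 2) ≤ psi y - psi x
  nu : Measure ℝ
  nu_eq : ∀ ⦃x⦄, x ∈ dom → ∀ ⦃y⦄, y ∈ dom → x ≤ y →
    nu (Ioc x y) = ENNReal.ofReal (psi y - psi x)

/-- The measure `ψ'`, extended by `+∞` on `I_π \ dom ψ`. -/
def PsiA.derivM (P : PsiA) : Measure ℝ :=
  P.nu.restrict P.dom + (∞ : ℝ≥0∞) • volume.restrict (Ioo (-(π / 2)) (π / 2) \ P.dom)

/-- The measure `ψ² dx`, extended by `+∞` on `I_π \ dom ψ`. -/
def PsiA.sqM (P : PsiA) : Measure ℝ :=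
  (volume.restrict P.dom).withDensity (fun x => ENNReal.ofReal ((P.psi x) ^ 2)) +
    (∞ : ℝ≥0∞) • volume.restrict (Ioo (-(π / 2)) (π / 2) \ P.dom)

/-- The measure `q = ψ' + ψ²`, extended by `+∞` on `I_π \ dom ψ`. -/
def PsiA.qM (P : PsiA) : Measure ℝ :=
  P.nu.restrict P.dom +
    (volume.restrict P.dom).withDensity (fun x => ENNReal.ofReal ((P.psi x) ^ 2)) +
    (∞ : ℝ≥0∞) • volume.restrict (Ioo (-(π / 2)) (π / 2) \ P.dom)

/-- The function `cos² x` on `I_π`, extended by zero. -/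
def cosSq : ℝ → ℝ := fun x => if x ∈ Ioo (-(π / 2)) (π / 2) then cos x ^ 2 else 0

/-- The measure with density `1 + 2 tan² x` on `I_π`. -/
def tanWeight : Measure ℝ :=
  (volume.restrict (Ioo (-(π / 2)) (π / 2))).withDensity
    fun x => ENNReal.ofReal (1 + 2 * tan x ^ 2)


lemma layer_sq (μ : Measure ℝ) {v : ℝ → ℝ} (hv : Continuous v) :
    ∫⁻ x, ENNReal.ofReal ((v x) ^ 2) ∂μ =
      ∫⁻ s in Ioi (0 : ℝ), μ {x | s < |v x|} * ENNReal.ofReal (2 * s) := by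
  have h := lintegral_comp_eq_lintegral_meas_lt_mul (f := fun x => |v x|) (g := fun s => 2 * s) μ
    (Eventually.of_forall fun x => abs_nonneg _) (hv.abs.measurable.aemeasurable)
    (fun t _ => (by fun_prop : Continuous fun s : ℝ => 2 * s).intervalIntegrable _ _)
    (by
      filter_upwards [ae_restrict_mem measurableSet_Ioi] with t ht
      have : (0 : ℝ) < t := ht
      positivity)
  rw [← h]
  refine lintegral_congr fun x => ?_
  congr 1
  rw [intervalIntegral.integral_const_mul, integral_id]
  rw [sq_abs]; ring

lemma area_ineq {v : ℝ → ℝ} (hv : ContDiff ℝ 1 v) {M : ℝ} {T : Set ℝ} (hTm : MeasurableSet T)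
    (hT : Ioo 0 M ⊆ v '' T) {h : ℝ → ℝ≥0∞} (hh : Measurable h) :
    ∫⁻ s in Ioo 0 M, h s ≤ ∫⁻ x in T, h |v x| * ENNReal.ofReal |deriv v x| := by
  have hvc : Continuous v := hv.continuous
  have hdc : Continuous (deriv v) := hv.continuous_deriv le_rfl
  have hdm : Measurable fun x => ENNReal.ofReal |deriv v x| :=
    hdc.abs.measurable.ennreal_ofReal
  have key : volume.restrict (Ioo 0 M) ≤
      Measure.map (fun x => |v x|) ((volume.restrict T).withDensity
        fun x => ENNReal.ofReal |deriv v x|) := by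
    refine Measure.le_iff.2 fun A hA => ?_
    have hmA : MeasurableSet ((fun x => |v x|) ⁻¹' A) := hvc.abs.measurable hA
    rw [Measure.restrict_apply hA, Measure.map_apply hvc.abs.measurable hA,
      withDensity_apply _ hmA, Measure.restrict_restrict hmA]
    set S := (fun x => |v x|) ⁻¹' A ∩ T with hS
    have h1 := addHaar_image_le_lintegral_abs_det_fderiv (μ := volume) (s := S) (f := v)
      (f' := fun x => ContinuousLinearMap.toSpanSingleton ℝ (deriv v x)) (hmA.inter hTm)
      (fun x _ => ((hv.differentiable (by norm_num)) x).hasDerivAt.hasFDerivAt.hasFDerivWithinAt)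
    simp only [ContinuousLinearMap.det_toSpanSingleton] at h1
    refine le_trans (measure_mono ?_) h1
    rintro s ⟨hsA, hs⟩
    obtain ⟨x, hx, rfl⟩ := hT hs
    refine ⟨x, ⟨?_, hx⟩, rfl⟩
    simp only [mem_preimage]
    rwa [abs_of_pos hs.1]
  calc ∫⁻ s in Ioo 0 M, h s ≤ ∫⁻ s, h s ∂(Measure.map (fun x => |v x|)
        ((volume.restrict T).withDensity fun x => ENNReal.ofReal |deriv v x|)) :=
        lintegral_mono' key le_rfl
    _ = ∫⁻ x in T, h |v x| * ENNReal.ofReal |deriv v x| := by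
        rw [lintegral_map hh hvc.abs.measurable]
        refine (lintegral_withDensity_eq_lintegral_mul _ hdm (hh.comp hvc.abs.measurable)).trans ?_
        refine lintegral_congr fun x => ?_
        simp [mul_comm]

/-- half the measure of the superlevel set -/
def Rf (μ : Measure ℝ) (u : ℝ → ℝ) (s : ℝ) : ℝ := μ.real {x | s < u x} / 2

lemma Rf_nonneg (μ : Measure ℝ) (u : ℝ → ℝ) (s : ℝ) : 0 ≤ Rf μ u s := by
  unfold Rf; positivity

lemma Rf_anti (μ : Measure ℝ) [IsFiniteMeasure μ] (u : ℝ → ℝ) : Antitone (Rf μ u) := by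
  intro s t hst
  unfold Rf
  have : μ.real {x | t < u x} ≤ μ.real {x | s < u x} :=
    measureReal_mono fun x hx => lt_of_le_of_lt hst hx
  linarith

lemma Rf_meas (μ : Measure ℝ) [IsFiniteMeasure μ] (u : ℝ → ℝ) (s : ℝ) :
    μ {x | s < u x} = ENNReal.ofReal (2 * Rf μ u s) := by
  unfold Rf
  rw [mul_div_cancel₀ _ (by norm_num), ofReal_measureReal]

lemma bath1 (μ : Measure ℝ) [IsFiniteMeasure μ] {u : ℝ → ℝ} (hu : Measurable u) (s ρ : ℝ) :
    μ {x | s < u x ∧ ρ ≤ Rf μ u (u x)} ≤ ENNReal.ofReal (2 * Rf μ u s - 2 * ρ) := by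
  set X := {x | s < u x ∧ ρ ≤ Rf μ u (u x)} with hX
  have step : ∀ x0 ∈ X, μ (X ∩ {x | u x ≤ u x0}) ≤ ENNReal.ofReal (2 * Rf μ u s - 2 * ρ) := by
    intro x0 hx0
    have hd : Disjoint (X ∩ {x | u x ≤ u x0}) {x | u x0 < u x} := by
      rw [Set.disjoint_left]
      rintro x ⟨_, h⟩ h'
      exact absurd (show u x0 < u x from h') (not_lt.2 h)
    have h1 : μ.real (X ∩ {x | u x ≤ u x0}) + μ.real {x | u x0 < u x} ≤ μ.real {x | s < u x} := by
      rw [← measureReal_union hd (measurableSet_lt measurable_const hu)]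
      refine measureReal_mono ?_
      rintro x (⟨h, _⟩ | h)
      · exact h.1
      · exact lt_trans hx0.1 h
    have h2 : ρ ≤ μ.real {x | u x0 < u x} / 2 := hx0.2
    have h3 : Rf μ u s = μ.real {x | s < u x} / 2 := rfl
    rw [← ofReal_measureReal (μ := μ)]
    refine ENNReal.ofReal_le_ofReal ?_
    rw [h3]; linarith
  rcases X.eq_empty_or_nonempty with he | hne
  · rw [he]; simp
  by_cases hmax : ∃ x0 ∈ X, ∀ x ∈ X, u x ≤ u x0
  · obtain ⟨x0, h0, h1⟩ := hmax
    refine le_trans (measure_mono fun x hx => ?_) (step x0 h0)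
    exact ⟨hx, h1 x hx⟩
  push Not at hmax
  -- choose a sequence
  have hbdd : ∃ c : ℕ → ℝ, Monotone c ∧ (∀ n, c n ∈ u '' X) ∧ ∀ x ∈ X, ∃ n, u x ≤ c n := by
    by_cases hb : BddAbove (u '' X)
    · obtain ⟨c, hc1, hc2, hc3⟩ := exists_seq_tendsto_sSup (hne.image u) hb
      refine ⟨c, hc1, hc3, fun x hx => ?_⟩
      obtain ⟨y, hy, hxy⟩ := hmax x hx
      have : u x < sSup (u '' X) := lt_of_lt_of_le hxy (le_csSup hb ⟨y, hy, rfl⟩)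
      obtain ⟨n, hn⟩ := (hc2.eventually (lt_mem_nhds this)).exists
      exact ⟨n, hn.le⟩
    · rw [not_bddAbove_iff] at hb
      have : ∀ t : ℝ, ∃ x ∈ X, t < u x := fun t => by
        obtain ⟨_, ⟨x, hx, rfl⟩, h⟩ := hb t
        exact ⟨x, hx, h⟩
      choose f hf hf' using this
      let g : ℕ → ℝ := fun n => Nat.rec (f 0) (fun k y => f (max (u y) k)) n
      have hgX : ∀ n, g n ∈ X := by
        intro n; cases n <;> exact hf _
      have hg : ∀ n, max (u (g n)) n < u (g (n + 1)) := fun n => hf' _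
      refine ⟨fun n => u (g n), monotone_nat_of_le_succ fun n =>
        (le_max_left _ _).trans (hg n).le, fun n => ⟨g n, hgX n, rfl⟩, fun x hx => ?_⟩
      obtain ⟨n, hn⟩ := exists_nat_ge (u x)
      exact ⟨n + 1, hn.trans ((le_max_right _ _).trans (hg n).le)⟩
  obtain ⟨c, hc1, hc2, hc3⟩ := hbdd
  have hU : X = ⋃ n, X ∩ {x | u x ≤ c n} := by
    ext x; simp only [mem_iUnion, mem_inter_iff, mem_ofPred_eq]
    constructor
    · intro hx
      obtain ⟨n, hn⟩ := hc3 x hx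
      exact ⟨n, hx, hn⟩
    · rintro ⟨n, hx, _⟩; exact hx
  have hmono : Monotone fun n => X ∩ {x | u x ≤ c n} := by
    intro n m hnm x hx
    exact ⟨hx.1, le_trans hx.2 (hc1 hnm)⟩
  rw [hU, hmono.measure_iUnion]
  refine iSup_le fun n => ?_
  obtain ⟨x0, h0, h1⟩ := hc2 n
  simp only [← h1]
  exact step x0 h0

lemma bath2 (μ : Measure ℝ) [IsFiniteMeasure μ] {u : ℝ → ℝ} (hu : Measurable u) {F : ℝ → ℝ}
    (hFm : Measurable F) (hF0 : ∀ x, 0 ≤ F x) {c : ℝ} (hF : MonotoneOn F (Ico 0 c)) {s : ℝ}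
    (hs : Rf μ u s < c) :
    ∫⁻ x in {x | s < u x}, ENNReal.ofReal (F (Rf μ u (u x))) ∂μ ≤
      2 * ∫⁻ y in Ioo 0 (Rf μ u s), ENNReal.ofReal (F y) := by
  have hRm : Measurable (Rf μ u) := (Rf_anti μ u).measurable
  have hEm : MeasurableSet {x | s < u x} := measurableSet_lt measurable_const hu
  have hm1 : Measurable fun x => F (Rf μ u (u x)) := hFm.comp (hRm.comp hu)
  rw [lintegral_eq_lintegral_meas_lt _ (Eventually.of_forall fun x => hF0 _) hm1.aemeasurable,
    lintegral_eq_lintegral_meas_lt _ (Eventually.of_forall fun x => hF0 _) hFm.aemeasurable,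
    ← lintegral_const_mul' _ _ (by norm_num)]
  refine lintegral_mono fun τ => ?_
  simp only
  rw [Measure.restrict_apply (measurableSet_lt measurable_const hm1),
    Measure.restrict_apply (measurableSet_lt measurable_const hFm)]
  set Y := {y | τ < F y} ∩ Icc 0 (Rf μ u s) with hY
  rcases Y.eq_empty_or_nonempty with he | hne
  · have : {x | τ < F (Rf μ u (u x))} ∩ {x | s < u x} = ∅ := by
      rw [Set.eq_empty_iff_forall_notMem]
      rintro x ⟨h1, h2⟩
      have : Rf μ u (u x) ∈ Y := ⟨h1, Rf_nonneg _ _ _, Rf_anti μ u (le_of_lt h2)⟩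
      rw [he] at this
      exact this
    rw [this]; simp
  have hbb : BddBelow Y := ⟨0, fun y hy => hy.2.1⟩
  have hρ0 : 0 ≤ sInf Y := le_csInf hne fun y hy => hy.2.1
  calc μ ({x | τ < F (Rf μ u (u x))} ∩ {x | s < u x})
      ≤ μ {x | s < u x ∧ sInf Y ≤ Rf μ u (u x)} := by
        refine measure_mono ?_
        rintro x ⟨h1, h2⟩
        exact ⟨h2, csInf_le hbb ⟨h1, Rf_nonneg _ _ _, Rf_anti μ u (le_of_lt h2)⟩⟩
    _ ≤ ENNReal.ofReal (2 * Rf μ u s - 2 * sInf Y) := bath1 μ hu _ _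
    _ = 2 * volume (Ioo (sInf Y) (Rf μ u s)) := by
        rw [Real.volume_Ioo, ← mul_sub, ENNReal.ofReal_mul (by norm_num)]; simp
    _ ≤ _ := by
        gcongr
        rintro y ⟨hy1, hy2⟩
        obtain ⟨z, hz, hzy⟩ := exists_lt_of_csInf_lt hne hy1
        have h0 : 0 < y := hρ0.trans_lt hy1
        exact ⟨lt_of_lt_of_le hz.1 (hF ⟨hz.2.1, hz.2.2.trans_lt hs⟩ ⟨h0.le, hy2.trans hs⟩ hzy.le),
          h0, hy2⟩

lemma tan_bound {s K R : ℝ} (hs : 0 < s) (hK : 0 < K) (hR0 : 0 ≤ R)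
    (hR : R ≤ max 0 (π / 2 - s / K)) : R < π / 2 ∧ s * tan R ≤ K := by
  have hsK : 0 < s / K := div_pos hs hK
  have hpi := pi_pos
  rcases le_max_iff.1 hR with h | h
  · have : R = 0 := le_antisymm h hR0
    subst this
    simp only [tan_zero, mul_zero]
    exact ⟨by linarith, hK.le⟩
  · refine ⟨by linarith, ?_⟩
    rcases lt_or_ge (s / K) (π / 2) with h2 | h2
    swap
    · have : R = 0 := by linarith
      subst this
      simp only [tan_zero, mul_zero]
      exact hK.le
    have h1 : tan R ≤ tan (π / 2 - s / K) :=
      strictMonoOn_tan.monotoneOn ⟨by linarith, by linarith⟩ ⟨by linarith, by linarith⟩ h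
    rw [tan_pi_div_two_sub] at h1
    have h3 : s / K ≤ tan (s / K) := le_tan hsK.le h2
    have h4 : (tan (s / K))⁻¹ ≤ (s / K)⁻¹ := inv_anti₀ hsK h3
    calc s * tan R ≤ s * (s / K)⁻¹ := by gcongr; linarith
      _ = K := by field_simp

lemma partA {v : ℝ → ℝ} (hv : TestFun (-(π / 2)) (π / 2) v) {m : ℝ}
    (hmI : m ∈ Icc (-(π / 2)) (π / 2)) (hm : ∀ x, |v x| ≤ v m)
    {H : ℝ → ℝ} (hHm : Measurable H) (hH0 : ∀ s, v m ≤ s → H s = 0) :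
    4 * ∫⁻ s in Ioi (0 : ℝ), ENNReal.ofReal (H s) ≤
      (∫⁻ x in Ioo (-(π / 2)) (π / 2), ENNReal.ofReal ((deriv v x) ^ 2)) +
      ∫⁻ x in Ioo (-(π / 2)) (π / 2), ENNReal.ofReal ((H |v x|) ^ 2) := by
  obtain ⟨hvC, hv0⟩ := hv
  have hva : v (-(π / 2)) = 0 := hv0 _ (by simp)
  have hvb : v (π / 2) = 0 := hv0 _ (by simp)
  have hvc := hvC.continuous
  have hdc : Continuous (deriv v) := hvC.continuous_deriv le_rfl
  have hh : Measurable fun s => ENNReal.ofReal (H s) := hHm.ennreal_ofReal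
  have h0 : ∫⁻ s in Ioi (0 : ℝ), ENNReal.ofReal (H s) =
      ∫⁻ s in Ioo 0 (v m), ENNReal.ofReal (H s) := by
    rw [← lintegral_indicator measurableSet_Ioi, ← lintegral_indicator measurableSet_Ioo]
    refine lintegral_congr fun s => ?_
    by_cases h : s ∈ Ioo 0 (v m)
    · rw [indicator_of_mem h, indicator_of_mem (show s ∈ Ioi (0:ℝ) from h.1)]
    · rw [indicator_of_notMem h]
      by_cases h' : s ∈ Ioi (0 : ℝ)
      · rw [indicator_of_mem h', hH0 s (by by_contra hc; exact h ⟨h', not_le.1 hc⟩)]; simp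
      · rw [indicator_of_notMem h']
  have h1 := area_ineq hvC (M := v m) (T := Ioo (-(π / 2)) m) measurableSet_Ioo
    (by
      have := intermediate_value_Ioo hmI.1 (f := v) hvc.continuousOn
      rwa [hva] at this) hh
  have h2 := area_ineq hvC (M := v m) (T := Ioo m (π / 2)) measurableSet_Ioo
    (by
      have := intermediate_value_Ioo' hmI.2 (f := v) hvc.continuousOn
      rwa [hvb] at this) hh
  have hd : Disjoint (Ioo (-(π / 2)) m) (Ioo m (π / 2)) := by
    rw [Set.disjoint_left]; rintro x hx hx'; exact absurd hx.2 (not_lt.2 hx'.1.le)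
  have h3 : (∫⁻ x in Ioo (-(π / 2)) m, ENNReal.ofReal (H |v x|) * ENNReal.ofReal |deriv v x|) +
      (∫⁻ x in Ioo m (π / 2), ENNReal.ofReal (H |v x|) * ENNReal.ofReal |deriv v x|) ≤
      ∫⁻ x in Ioo (-(π / 2)) (π / 2), ENNReal.ofReal (H |v x|) * ENNReal.ofReal |deriv v x| := by
    rw [← lintegral_union measurableSet_Ioo hd]
    refine lintegral_mono_set ?_
    rintro x (hx | hx)
    · exact ⟨hx.1, hx.2.trans_le hmI.2⟩
    · exact ⟨hmI.1.trans_lt hx.1, hx.2⟩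
  have h4 : 2 * (∫⁻ x in Ioo (-(π / 2)) (π / 2),
        ENNReal.ofReal (H |v x|) * ENNReal.ofReal |deriv v x|) ≤
      (∫⁻ x in Ioo (-(π / 2)) (π / 2), ENNReal.ofReal ((deriv v x) ^ 2)) +
      ∫⁻ x in Ioo (-(π / 2)) (π / 2), ENNReal.ofReal ((H |v x|) ^ 2) := by
    rw [← lintegral_const_mul' _ _ (by norm_num),
      ← lintegral_add_left (by fun_prop : Measurable fun x => ENNReal.ofReal ((deriv v x) ^ 2))]
    refine lintegral_mono fun x => ?_
    simp only
    rw [← ENNReal.ofReal_add (by positivity) (by positivity),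
      ← ENNReal.ofReal_mul' (abs_nonneg _), ← ENNReal.ofReal_ofNat, ← ENNReal.ofReal_mul (by norm_num)]
    refine ENNReal.ofReal_le_ofReal ?_
    have := two_mul_le_add_sq (H |v x|) |deriv v x|
    rw [sq_abs] at this
    linarith
  refine le_trans ?_ h4
  rw [h0]
  calc 4 * ∫⁻ s in Ioo 0 (v m), ENNReal.ofReal (H s)
      = 2 * ((∫⁻ s in Ioo 0 (v m), ENNReal.ofReal (H s)) +
        ∫⁻ s in Ioo 0 (v m), ENNReal.ofReal (H s)) := by
        rw [← two_mul, ← mul_assoc]; norm_num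
    _ ≤ _ := by gcongr; exact (add_le_add h1 h2).trans h3

lemma TestFun.neg {a b : ℝ} {v : ℝ → ℝ} (hv : TestFun a b v) : TestFun a b (fun x => - v x) :=
  ⟨hv.1.neg, fun x hx => by simp [hv.2 x hx]⟩

lemma testfun_lip {v : ℝ → ℝ} (hv : TestFun (-(π / 2)) (π / 2) v) :
    ∃ K : ℝ, 0 < K ∧ ∀ x ∈ Ioo (-(π / 2)) (π / 2),
      |v x| ≤ K * (x + π / 2) ∧ |v x| ≤ K * (π / 2 - x) := by
  obtain ⟨hvC, hv0⟩ := hv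
  have hva : v (-(π / 2)) = 0 := hv0 _ (by simp)
  have hvb : v (π / 2) = 0 := hv0 _ (by simp)
  have hpi := pi_pos
  have hdc : Continuous (deriv v) := hvC.continuous_deriv le_rfl
  obtain ⟨C, hC⟩ := (isCompact_Icc (a := -(π / 2)) (b := π / 2)).exists_bound_of_continuousOn
    hdc.continuousOn
  have hlip : ∀ x ∈ Icc (-(π / 2)) (π / 2), ∀ y ∈ Icc (-(π / 2)) (π / 2),
      ‖v y - v x‖ ≤ (|C| + 1) * ‖y - x‖ := fun x hx y hy =>
    (convex_Icc _ _).norm_image_sub_le_of_norm_deriv_le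
      (fun z _ => hvC.differentiable (by norm_num) z)
      (fun z hz => (hC z hz).trans (by linarith [le_abs_self C])) hx hy
  refine ⟨|C| + 1, by positivity, fun x hx => ⟨?_, ?_⟩⟩
  · have := hlip (-(π / 2)) ⟨by linarith, by linarith⟩ x ⟨hx.1.le, hx.2.le⟩
    rw [hva, sub_zero, Real.norm_eq_abs, Real.norm_eq_abs, sub_neg_eq_add,
      abs_of_pos (show 0 < x + π / 2 by linarith [hx.1])] at this
    exact this
  · have := hlip (π / 2) ⟨by linarith, by linarith⟩ x ⟨hx.1.le, hx.2.le⟩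
    rw [hvb, sub_zero, Real.norm_eq_abs, Real.norm_eq_abs, abs_sub_comm,
      abs_of_pos (show 0 < π / 2 - x by linarith [hx.2])] at this
    exact this

lemma key {v : ℝ → ℝ} (hv : TestFun (-(π / 2)) (π / 2) v) (q : Measure ℝ) {G Φ : ℝ → ℝ}
    {Λ C : ℝ} (hGm : Measurable G) (hG0 : G 0 = 0)
    (hG : MonotoneOn G (Ico 0 (π / 2)))
    (hq : ∀ E, MeasurableSet E → E ⊆ Ioo (-(π / 2)) (π / 2) → ∀ r ∈ Ico 0 (π / 2),
      volume E = ENNReal.ofReal (2 * r) → ENNReal.ofReal (Φ r) ≤ q E)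
    (hpt : ∀ r ∈ Ico 0 (π / 2), ENNReal.ofReal Λ * ENNReal.ofReal (2 * r) +
      2 * ∫⁻ y in Ioo 0 r, ENNReal.ofReal ((G y) ^ 2) ≤
        ENNReal.ofReal (2 * G r) + ENNReal.ofReal (Φ r))
    (hΦ0 : ∀ r ∈ Ico 0 (π / 2), 0 ≤ Φ r)
    (hC : ∀ r ∈ Ico 0 (π / 2), 2 * G r + Φ r ≤ C * (1 + tan r)) :
    ENNReal.ofReal Λ * (∫⁻ x in Ioo (-(π / 2)) (π / 2), ENNReal.ofReal ((v x) ^ 2)) ≤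
      (∫⁻ x in Ioo (-(π / 2)) (π / 2), ENNReal.ofReal ((deriv v x) ^ 2)) +
      ∫⁻ x in Ioo (-(π / 2)) (π / 2), ENNReal.ofReal ((v x) ^ 2) ∂q := by
  have hpi := pi_pos
  have hvc : Continuous v := hv.1.continuous
  have hum : Measurable fun x => |v x| := hvc.abs.measurable
  have hGnn : ∀ r ∈ Ico 0 (π / 2), 0 ≤ G r := fun r hr => by
    rw [← hG0]; exact hG ⟨le_rfl, by linarith⟩ hr hr.1
  set μ := volume.restrict (Ioo (-(π / 2)) (π / 2)) with hμ
  set R := Rf μ (fun x => |v x|) with hR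
  have hRm : Measurable R := (Rf_anti μ _).measurable
  obtain ⟨K, hK, hlip⟩ := testfun_lip hv
  -- superlevel sets
  have hEI : ∀ s : ℝ, 0 < s → {x | s < |v x|} ⊆ Ioo (-(π / 2)) (π / 2) := by
    intro s hs x hx
    by_contra hc
    have h1 : s < |v x| := hx
    rw [hv.2 x hc, abs_zero] at h1
    linarith
  have hEm : ∀ s : ℝ, MeasurableSet {x | s < |v x|} := fun s =>
    measurableSet_lt measurable_const hum
  have hRb : ∀ s, 0 < s → R s < π / 2 ∧ s * tan (R s) ≤ K := by
    intro s hs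
    refine tan_bound hs hK (Rf_nonneg _ _ _) ?_
    have h1 : μ {x | s < |v x|} ≤ ENNReal.ofReal (π - 2 * (s / K)) := by
      have hsub : {x | s < |v x|} ⊆ Ioo (-(π / 2) + s / K) (π / 2 - s / K) := by
        intro x hx
        have hx' : s < |v x| := hx
        obtain ⟨h1, h2⟩ := hlip x (hEI s hs hx)
        have h3 : s / K < x + π / 2 := by rw [div_lt_iff₀ hK]; linarith
        have h4 : s / K < π / 2 - x := by rw [div_lt_iff₀ hK]; linarith
        exact ⟨by linarith, by linarith⟩
      calc μ {x | s < |v x|} ≤ volume {x | s < |v x|} := Measure.restrict_apply_le _ _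
        _ ≤ volume (Ioo (-(π / 2) + s / K) (π / 2 - s / K)) := measure_mono hsub
        _ = _ := by rw [Real.volume_Ioo]; congr 1; ring
    have h2 : μ.real {x | s < |v x|} ≤ max (π - 2 * (s / K)) 0 := by
      have := ENNReal.toReal_mono (by simp) h1
      rwa [ENNReal.toReal_ofReal'] at this
    have h3 : R s = μ.real {x | s < |v x|} / 2 := rfl
    rw [h3]
    rcases le_max_iff.1 h2 with h | h
    · exact le_max_of_le_right (by linarith)
    · exact le_max_of_le_left (by linarith)
  have hRI : ∀ s, 0 < s → R s ∈ Ico 0 (π / 2) := fun s hs => ⟨Rf_nonneg _ _ _, (hRb s hs).1⟩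
  -- maximum of |v|
  obtain ⟨m, hmI, hm⟩ := (isCompact_Icc (a := -(π / 2)) (b := π / 2)).exists_isMaxOn
    ⟨0, by constructor <;> linarith⟩ (hvc.abs.continuousOn)
  have hm' : ∀ x, |v x| ≤ |v m| := by
    intro x
    by_cases hx : x ∈ Ioo (-(π / 2)) (π / 2)
    · exact hm ⟨hx.1.le, hx.2.le⟩
    · rw [hv.2 x hx, abs_zero]; exact abs_nonneg _
  have hRM : ∀ s, |v m| ≤ s → R s = 0 := by
    intro s hs
    have h3 : R s = μ.real {x | s < |v x|} / 2 := rfl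
    have : {x | s < |v x|} = ∅ := by
      rw [Set.eq_empty_iff_forall_notMem]
      intro x hx
      have h1 : s < |v x| := hx
      linarith [hm' x]
    rw [h3, this]; simp
  -- step A
  set H : ℝ → ℝ := fun s => s * G (R s) with hH
  have hHm : Measurable H := measurable_id.mul (hGm.comp hRm)
  have hH0 : ∀ s, |v m| ≤ s → H s = 0 := fun s hs => by simp [hH, hRM s hs, hG0]
  set B := ∫⁻ x in Ioo (-(π / 2)) (π / 2), ENNReal.ofReal ((H |v x|) ^ 2) with hB
  have stepA : 4 * ∫⁻ s in Ioi (0 : ℝ), ENNReal.ofReal (H s) ≤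
      (∫⁻ x in Ioo (-(π / 2)) (π / 2), ENNReal.ofReal ((deriv v x) ^ 2)) + B := by
    rcases le_total 0 (v m) with h | h
    · rw [abs_of_nonneg h] at hm' hH0
      exact partA hv hmI hm' hHm hH0
    · rw [abs_of_nonpos h] at hm' hH0
      have := partA hv.neg hmI (by simpa using hm') hHm hH0
      simpa using this
  -- step B
  have stepB : B ≤ ∫⁻ s in Ioi (0 : ℝ),
      (2 * ∫⁻ y in Ioo 0 (R s), ENNReal.ofReal ((G y) ^ 2)) * ENNReal.ofReal (2 * s) := by
    have hFm : Measurable fun y => (G y) ^ 2 := hGm.pow_const 2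
    have hdm : Measurable fun x => ENNReal.ofReal ((G (R |v x|)) ^ 2) :=
      (hFm.comp (hRm.comp hum)).ennreal_ofReal
    have h1 : B = ∫⁻ x, ENNReal.ofReal ((v x) ^ 2)
        ∂(μ.withDensity fun x => ENNReal.ofReal ((G (R |v x|)) ^ 2)) := by
      rw [lintegral_withDensity_eq_lintegral_mul _ hdm
        (by fun_prop : Measurable fun x => ENNReal.ofReal ((v x) ^ 2))]
      refine lintegral_congr fun x => ?_
      simp only [Pi.mul_apply]
      rw [← ENNReal.ofReal_mul (by positivity), hH]
      simp only
      rw [mul_pow, sq_abs, mul_comm]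
    rw [h1, layer_sq _ hvc]
    refine setLIntegral_mono' measurableSet_Ioi fun s hs => ?_
    gcongr
    rw [withDensity_apply _ (hEm s)]
    refine bath2 μ hum hFm (fun x => by positivity) (c := π / 2) ?_ (hRb s hs).1
    intro x hx y hy hxy
    exact pow_le_pow_left₀ (hGnn x hx) (hG hx hy hxy) 2
  -- step C
  have stepC : ∫⁻ s in Ioi (0 : ℝ), ENNReal.ofReal (Φ (R s)) * ENNReal.ofReal (2 * s) ≤
      ∫⁻ x in Ioo (-(π / 2)) (π / 2), ENNReal.ofReal ((v x) ^ 2) ∂q := by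
    rw [layer_sq _ hvc]
    refine setLIntegral_mono' measurableSet_Ioi fun s hs => ?_
    gcongr
    rw [Measure.restrict_apply (hEm s), inter_eq_left.2 (hEI s hs)]
    refine hq _ (hEm s) (hEI s hs) _ (hRI s hs) ?_
    rw [← Rf_meas, hμ, Measure.restrict_apply (hEm s), inter_eq_left.2 (hEI s hs)]
  -- step D
  have stepD : ∫⁻ x in Ioo (-(π / 2)) (π / 2), ENNReal.ofReal ((v x) ^ 2) =
      ∫⁻ s in Ioi (0 : ℝ), ENNReal.ofReal (2 * R s) * ENNReal.ofReal (2 * s) := by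
    rw [layer_sq _ hvc]
    refine lintegral_congr fun s => ?_
    rw [Rf_meas]
  have hA' : 4 * ∫⁻ s in Ioi (0 : ℝ), ENNReal.ofReal (H s) =
      ∫⁻ s in Ioi (0 : ℝ), ENNReal.ofReal (2 * G (R s)) * ENNReal.ofReal (2 * s) := by
    rw [← lintegral_const_mul' _ _ (by norm_num)]
    refine setLIntegral_congr_fun measurableSet_Ioi fun s hs => ?_
    have hs' : (0 : ℝ) < s := hs
    simp only [hH]
    rw [← ENNReal.ofReal_ofNat, ← ENNReal.ofReal_mul (by norm_num),
      ← ENNReal.ofReal_mul' (by positivity)]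
    congr 1; ring
  set B' := ∫⁻ s in Ioi (0 : ℝ),
      (2 * ∫⁻ y in Ioo 0 (R s), ENNReal.ofReal ((G y) ^ 2)) * ENNReal.ofReal (2 * s) with hB'
  have hB'fin : B' ≠ ∞ := by
    have hle : B' ≤ ∫⁻ s in Ioi (0 : ℝ), (Ioo 0 (|v m|)).indicator
        (fun _ => ENNReal.ofReal (2 * |C| * (|v m| + K))) s := by
      refine setLIntegral_mono' measurableSet_Ioi fun s hs => ?_
      have hs' : (0 : ℝ) < s := hs
      by_cases hsm : s < |v m|
      · rw [indicator_of_mem (show s ∈ Ioo 0 (|v m|) from ⟨hs', hsm⟩)]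
        have hRs := hRI s hs
        have htan : 0 ≤ tan (R s) := tan_nonneg_of_nonneg_of_le_pi_div_two hRs.1 hRs.2.le
        calc (2 * ∫⁻ y in Ioo 0 (R s), ENNReal.ofReal ((G y) ^ 2)) * ENNReal.ofReal (2 * s)
            ≤ ENNReal.ofReal (2 * G (R s) + Φ (R s)) * ENNReal.ofReal (2 * s) := by
              gcongr
              rw [ENNReal.ofReal_add (by linarith [hGnn _ hRs]) (hΦ0 _ hRs)]
              exact le_trans le_add_self (hpt _ hRs)
          _ = ENNReal.ofReal ((2 * G (R s) + Φ (R s)) * (2 * s)) := by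
              rw [← ENNReal.ofReal_mul' (by positivity)]
          _ ≤ _ := by
              refine ENNReal.ofReal_le_ofReal ?_
              calc (2 * G (R s) + Φ (R s)) * (2 * s) ≤ (C * (1 + tan (R s))) * (2 * s) := by
                    gcongr; exact hC _ hRs
                _ ≤ (|C| * (1 + tan (R s))) * (2 * s) := by gcongr; exact le_abs_self C
                _ = 2 * |C| * (s + s * tan (R s)) := by ring
                _ ≤ _ := by gcongr; exact (hRb s hs').2
      · rw [hRM s (not_lt.1 hsm)]; simp
    refine ne_top_of_le_ne_top ?_ hle
    refine ne_top_of_le_ne_top ?_ (setLIntegral_le_lintegral _ _)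
    rw [lintegral_indicator measurableSet_Ioo]
    simp only [lintegral_const, MeasurableSet.univ, Measure.restrict_apply, univ_inter, Real.volume_Ioo]
    exact ENNReal.mul_ne_top ENNReal.ofReal_ne_top ENNReal.ofReal_ne_top
  have main : ENNReal.ofReal Λ * (∫⁻ x in Ioo (-(π / 2)) (π / 2), ENNReal.ofReal ((v x) ^ 2)) + B'
      ≤ ((∫⁻ x in Ioo (-(π / 2)) (π / 2), ENNReal.ofReal ((deriv v x) ^ 2)) +
      ∫⁻ x in Ioo (-(π / 2)) (π / 2), ENNReal.ofReal ((v x) ^ 2) ∂q) + B' := by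
    calc _ = ∫⁻ s in Ioi (0 : ℝ), (ENNReal.ofReal Λ * (ENNReal.ofReal (2 * R s) *
            ENNReal.ofReal (2 * s)) +
            (2 * ∫⁻ y in Ioo 0 (R s), ENNReal.ofReal ((G y) ^ 2)) * ENNReal.ofReal (2 * s)) := by
          rw [stepD, ← lintegral_const_mul' _ _ (by simp), lintegral_add_left]
          fun_prop
      _ ≤ ∫⁻ s in Ioi (0 : ℝ), (ENNReal.ofReal (2 * G (R s)) * ENNReal.ofReal (2 * s) +
            ENNReal.ofReal (Φ (R s)) * ENNReal.ofReal (2 * s)) := by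
          refine setLIntegral_mono' measurableSet_Ioi fun s hs => ?_
          rw [← mul_assoc, ← add_mul, ← add_mul]
          exact mul_le_mul_left (hpt _ (hRI s hs)) _
      _ = (∫⁻ s in Ioi (0 : ℝ), ENNReal.ofReal (2 * G (R s)) * ENNReal.ofReal (2 * s)) +
            ∫⁻ s in Ioi (0 : ℝ), ENNReal.ofReal (Φ (R s)) * ENNReal.ofReal (2 * s) := by
          rw [lintegral_add_left]
          fun_prop
      _ ≤ ((∫⁻ x in Ioo (-(π / 2)) (π / 2), ENNReal.ofReal ((deriv v x) ^ 2)) + B') +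
            ∫⁻ x in Ioo (-(π / 2)) (π / 2), ENNReal.ofReal ((v x) ^ 2) ∂q := by
          rw [← hA']
          gcongr
          exact stepA.trans (by gcongr)
      _ = _ := by ring
  exact (ENNReal.add_le_add_iff_right hB'fin).1 main

lemma layer_sq' (μ : Measure ℝ) {v : ℝ → ℝ} (hv : AEMeasurable v μ) :
    ∫⁻ x, ENNReal.ofReal ((v x) ^ 2) ∂μ =
      ∫⁻ s in Ioi (0 : ℝ), μ {x | s < |v x|} * ENNReal.ofReal (2 * s) := by
  have h := lintegral_comp_eq_lintegral_meas_lt_mul (f := fun x => |v x|) (g := fun s => 2 * s) μ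
    (Eventually.of_forall fun x => abs_nonneg _) hv.abs
    (fun t _ => (by fun_prop : Continuous fun s : ℝ => 2 * s).intervalIntegrable _ _)
    (by
      filter_upwards [ae_restrict_mem measurableSet_Ioi] with t ht
      have : (0 : ℝ) < t := ht
      positivity)
  rw [← h]
  refine lintegral_congr fun x => ?_
  congr 1
  rw [intervalIntegral.integral_const_mul, integral_id]
  rw [sq_abs]; ring

/-- sublevel sets of `|ψ|` -/
def PsiA.lev (P : PsiA) (t : ℝ) : Set ℝ := {x | x ∈ P.dom ∧ |P.psi x| ≤ t}

lemma PsiA.gap_arctan (P : PsiA) {x y T : ℝ} (hx : x ∈ P.dom) (hy : y ∈ P.dom) (hxy : x ≤ y)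
    (h : P.psi y - P.psi x ≤ 2 * T) (hT : 0 ≤ T) : y - x ≤ 2 * arctan T := by
  rcases hxy.eq_or_lt with rfl | hlt
  · have := arctan_nonneg.2 hT
    linarith
  have h1 := P.gap hx hy hlt
  have h2 : tan ((y - x) / 2) ≤ T := by linarith
  have hX := P.domSub hx
  have hY := P.domSub hy
  have h3 := arctan_mono h2
  rw [arctan_tan (by linarith [pi_pos]) (by linarith [hX.1, hY.2])] at h3
  linarith

lemma PsiA.lev_diam (P : PsiA) {t : ℝ} (ht : 0 ≤ t) {x y : ℝ} (hx : x ∈ P.lev t)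
    (hy : y ∈ P.lev t) : y - x ≤ 2 * arctan t := by
  rcases le_total x y with h | h
  · refine P.gap_arctan hx.1 hy.1 h ?_ ht
    have h1 := abs_le.1 hx.2
    have h2 := abs_le.1 hy.2
    linarith
  · have := arctan_nonneg.2 ht
    linarith

lemma PsiA.lev_vol (P : PsiA) {t : ℝ} (ht : 0 ≤ t) :
    volume (P.lev t) ≤ ENNReal.ofReal (2 * arctan t) := by
  refine (Real.volume_le_diam _).trans ?_
  refine Metric.ediam_le fun x hx y hy => ?_
  rw [edist_dist]
  refine ENNReal.ofReal_le_ofReal ?_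
  rw [Real.dist_eq]
  exact abs_le.2 ⟨by linarith [P.lev_diam ht hx hy], P.lev_diam ht hy hx⟩

lemma PsiA.sq_lower (P : PsiA) {E : Set ℝ} (hE : MeasurableSet E)
    (hEI : E ⊆ Ioo (-(π / 2)) (π / 2)) {r : ℝ} (hvol : volume E = ENNReal.ofReal (2 * r))
    {l : ℝ → ℝ} (hl0 : ∀ t, 0 < t → 0 ≤ l t)
    (hl : ∀ t, 0 < t → volume (P.lev t) ≤ ENNReal.ofReal (l t)) :
    ∫⁻ t in Ioi (0 : ℝ), ENNReal.ofReal (2 * r - l t) * ENNReal.ofReal (2 * t) ≤ P.sqM E := by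
  have hdm : MeasurableSet P.dom := P.domConn.measurableSet
  unfold PsiA.sqM
  rw [Measure.add_apply, Measure.smul_apply, smul_eq_mul,
    Measure.restrict_apply hE]
  by_cases h0 : volume (E ∩ (Ioo (-(π / 2)) (π / 2) \ P.dom)) = 0
  swap
  · rw [ENNReal.top_mul h0]; simp
  refine le_trans ?_ le_self_add
  rw [withDensity_apply _ hE]
  set μ := (volume.restrict P.dom).restrict E with hμ
  have hae : AEMeasurable P.psi μ :=
    (aemeasurable_restrict_of_monotoneOn hdm P.mono).mono_measure Measure.restrict_le_self
  rw [layer_sq' μ hae]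
  refine setLIntegral_mono' measurableSet_Ioi fun t ht => ?_
  gcongr
  have huniv : ENNReal.ofReal (2 * r) ≤ μ univ := by
    rw [hμ, Measure.restrict_apply_univ, Measure.restrict_apply hE, ← hvol]
    calc volume E ≤ volume (E ∩ P.dom) + volume (E ∩ (Ioo (-(π / 2)) (π / 2) \ P.dom)) := by
          refine (measure_mono ?_).trans (measure_union_le _ _)
          intro x hx
          by_cases hxd : x ∈ P.dom
          · exact Or.inl ⟨hx, hxd⟩
          · exact Or.inr ⟨hx, hEI hx, hxd⟩
      _ = _ := by rw [h0, add_zero]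
  have hle : μ {x | |P.psi x| ≤ t} ≤ ENNReal.ofReal (l t) := by
    refine le_trans ?_ (hl t ht)
    refine le_trans (Measure.restrict_apply_le _ _) ?_
    rw [Measure.restrict_apply' hdm]
    exact measure_mono fun x hx => ⟨hx.2, hx.1⟩
  rw [ENNReal.ofReal_sub _ (hl0 t ht), tsub_le_iff_right]
  calc ENNReal.ofReal (2 * r) ≤ μ univ := huniv
    _ ≤ μ ({x | t < |P.psi x|} ∪ {x | |P.psi x| ≤ t}) := by
        refine measure_mono fun x _ => ?_
        rcases lt_or_ge t |P.psi x| with h | h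
        · exact Or.inl h
        · exact Or.inr h
    _ ≤ _ := (measure_union_le _ _).trans (by gcongr)

lemma base_int {r : ℝ} (hr : r ∈ Ico 0 (π / 2)) :
    ∫⁻ t in Ioo 0 (tan r), ENNReal.ofReal ((2 * r - 2 * arctan t) * (2 * t)) =
      ENNReal.ofReal (2 * (tan r - r)) := by
  have hT : 0 ≤ tan r := tan_nonneg_of_nonneg_of_le_pi_div_two hr.1 hr.2.le
  have hat : arctan (tan r) = r := arctan_tan (by linarith [hr.1, pi_pos]) hr.2
  have hcont : Continuous fun t : ℝ => (2 * r - 2 * arctan t) * (2 * t) := by fun_prop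
  have hintg : ∫ t in (0 : ℝ)..tan r, (2 * r - 2 * arctan t) * (2 * t) = 2 * (tan r - r) := by
    rw [intervalIntegral.integral_eq_sub_of_hasDerivAt
      (f := fun t => 2 * r * t ^ 2 - 2 * ((t ^ 2 + 1) * arctan t - t)) _
      (hcont.intervalIntegrable _ _)]
    · simp only [hat, arctan_zero]; ring
    · intro t _
      have h1 := (((hasDerivAt_pow 2 t).add_const 1).mul (hasDerivAt_arctan t)).sub (hasDerivAt_id t)
      have h2 := ((hasDerivAt_pow 2 t).const_mul (2 * r)).sub (h1.const_mul 2)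
      refine (h2.congr_deriv ?_)
      have : (1 : ℝ) + t ^ 2 ≠ 0 := by positivity
      field_simp
      push_cast
      ring
  rw [← hintg, intervalIntegral.integral_of_le hT, integral_Ioc_eq_integral_Ioo,
    ofReal_integral_eq_lintegral_ofReal]
  · exact (hcont.integrableOn_Icc).mono_set Ioo_subset_Icc_self
  · filter_upwards [ae_restrict_mem measurableSet_Ioo] with t ht
    have h1 : arctan t ≤ r := by rw [← hat]; exact arctan_mono ht.2.le
    have h2 := ht.1
    exact mul_nonneg (by linarith) (by linarith)

lemma PsiA.sq_lower0 (P : PsiA) {E : Set ℝ} (hE : MeasurableSet E)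
    (hEI : E ⊆ Ioo (-(π / 2)) (π / 2)) {r : ℝ} (hr : r ∈ Ico 0 (π / 2))
    (hvol : volume E = ENNReal.ofReal (2 * r)) :
    ENNReal.ofReal (2 * (tan r - r)) ≤ P.sqM E := by
  refine le_trans ?_ (P.sq_lower hE hEI hvol (l := fun t => 2 * arctan t)
    (fun t ht => by have := arctan_nonneg.2 ht.le; linarith) (fun t ht => P.lev_vol ht.le))
  rw [← base_int hr]
  refine le_trans ?_ (lintegral_mono_set (s := Ioo 0 (tan r)) fun x hx => hx.1)
  refine setLIntegral_mono' measurableSet_Ioo fun t ht => ?_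
  rw [← ENNReal.ofReal_mul' (by linarith [ht.1])]

lemma PsiA.sq_lower1 (P : PsiA) {E : Set ℝ} (hE : MeasurableSet E)
    (hEI : E ⊆ Ioo (-(π / 2)) (π / 2)) {r : ℝ} (hr : r ∈ Ico 0 (π / 2))
    (hvol : volume E = ENNReal.ofReal (2 * r)) {t0 t1 L0 : ℝ} (ht1 : 0 < t1) (ht01 : t1 < t0)
    (hL00 : 0 ≤ L0) (hL0 : volume (P.lev t0) ≤ ENNReal.ofReal L0) (hL1 : L0 < 2 * arctan t1)
    (hr0 : arctan t0 ≤ r) :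
    ENNReal.ofReal (2 * (tan r - r) + (2 * arctan t1 - L0) * (2 * t1) * (t0 - t1)) ≤ P.sqM E := by
  classical
  have hat : arctan (tan r) = r := arctan_tan (by linarith [hr.1, pi_pos]) hr.2
  have ht0 : t0 ≤ tan r := by
    have := tan_arctan t0
    rw [← this]
    exact strictMonoOn_tan.monotoneOn (arctan_mem_Ioo _) ⟨by linarith [hr.1, pi_pos], hr.2⟩ hr0
  refine le_trans ?_ (P.sq_lower hE hEI hvol (l := fun t => if t ∈ Ioo t1 t0 then L0 else 2 * arctan t)
    (fun t ht => by
      have := arctan_nonneg.2 ht.le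
      split_ifs <;> linarith)
    (fun t ht => by
      split_ifs with h
      · exact (measure_mono (show P.lev t ⊆ P.lev t0 from
          fun x hx => ⟨hx.1, hx.2.trans h.2.le⟩)).trans hL0
      · exact P.lev_vol ht.le))
  have hk : 0 ≤ (2 * arctan t1 - L0) * (2 * t1) := by
    exact mul_nonneg (by linarith) (by linarith)
  have hbase : 0 ≤ 2 * (tan r - r) := by have := le_tan hr.1 hr.2; linarith
  rw [ENNReal.ofReal_add hbase (mul_nonneg hk (by linarith)), ← base_int hr,
    ENNReal.ofReal_mul hk, ← Real.volume_Ioo]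
  have hind : ENNReal.ofReal ((2 * arctan t1 - L0) * (2 * t1)) * volume (Ioo t1 t0) =
      ∫⁻ t in Ioo 0 (tan r), (Ioo t1 t0).indicator
        (fun _ => ENNReal.ofReal ((2 * arctan t1 - L0) * (2 * t1))) t := by
    rw [lintegral_indicator measurableSet_Ioo, Measure.restrict_restrict measurableSet_Ioo,
      inter_eq_left.2 (show Ioo t1 t0 ⊆ Ioo 0 (tan r) from
        fun x hx => ⟨ht1.trans hx.1, hx.2.trans_le ht0⟩)]
    simp
  rw [hind, ← lintegral_add_left (by fun_prop)]
  refine le_trans ?_ (lintegral_mono_set (s := Ioo 0 (tan r)) fun x hx => hx.1)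
  refine setLIntegral_mono' measurableSet_Ioo fun t ht => ?_
  have ht' := ht.1
  rw [← ENNReal.ofReal_mul' (by linarith)]
  by_cases h : t ∈ Ioo t1 t0
  · rw [indicator_of_mem h, if_pos h]
    have h1 : arctan t ≤ r := by rw [← hat]; exact arctan_mono ht.2.le
    have h2 : arctan t1 ≤ arctan t := arctan_mono h.1.le
    rw [← ENNReal.ofReal_add (mul_nonneg (by linarith) (by linarith)) hk]
    refine ENNReal.ofReal_le_ofReal ?_
    have h3 : (2 * arctan t1 - L0) * (2 * t1) ≤ (2 * arctan t - L0) * (2 * t) :=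
      mul_le_mul (by linarith) (by linarith [h.1]) (by linarith) (by linarith)
    linarith
  · rw [indicator_of_notMem h, if_neg h, add_zero]

lemma lint_le_of_deriv {f D D' : ℝ → ℝ} {r : ℝ} (hr : 0 ≤ r)
    (hD : ∀ x ∈ Icc 0 r, HasDerivAt D (D' x) x) (hf : ∀ x ∈ Icc 0 r, f x ≤ D' x)
    (hf0 : ∀ x ∈ Icc 0 r, 0 ≤ f x) (hc : ContinuousOn D' (Icc 0 r)) :
    ∫⁻ y in Ioo 0 r, ENNReal.ofReal (f y) ≤ ENNReal.ofReal (D r - D 0) := by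
  have hintg : ∫ t in (0 : ℝ)..r, D' t = D r - D 0 := by
    refine intervalIntegral.integral_eq_sub_of_hasDerivAt ?_ ?_
    · rw [uIcc_of_le hr]; exact hD
    · refine ContinuousOn.intervalIntegrable ?_
      rwa [uIcc_of_le hr]
  rw [← hintg, intervalIntegral.integral_of_le hr, integral_Ioc_eq_integral_Ioo,
    ofReal_integral_eq_lintegral_ofReal]
  · refine setLIntegral_mono' measurableSet_Ioo fun t ht => ?_
    exact ENNReal.ofReal_le_ofReal (hf t ⟨ht.1.le, ht.2.le⟩)
  · exact (hc.integrableOn_Icc).mono_set Ioo_subset_Icc_self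
  · filter_upwards [ae_restrict_mem measurableSet_Ioo] with t ht
    exact (hf0 t ⟨ht.1.le, ht.2.le⟩).trans (hf t ⟨ht.1.le, ht.2.le⟩)

lemma cos_ne {r x : ℝ} (hr : r ∈ Ico 0 (π / 2)) (hx : x ∈ Icc 0 r) : cos x ≠ 0 :=
  (cos_pos_of_mem_Ioo ⟨by linarith [hx.1, pi_pos], hx.2.trans_lt hr.2⟩).ne'

lemma tan_deriv {x : ℝ} (h : cos x ≠ 0) : HasDerivAt tan (1 + tan x ^ 2) x := by
  refine (hasDerivAt_tan h).congr_deriv ?_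
  rw [tan_eq_sin_div_cos]
  field_simp
  linarith [sin_sq_add_cos_sq x]

lemma tan_contOn {r : ℝ} (hr : r ∈ Ico 0 (π / 2)) : ContinuousOn tan (Icc 0 r) :=
  fun x hx => (continuousAt_tan.2 (cos_ne hr hx)).continuousWithinAt

lemma measurable_tan' : Measurable tan := by
  have : tan = fun x => sin x / cos x := by ext x; exact tan_eq_sin_div_cos x
  rw [this]; fun_prop

lemma tan_monoOn : MonotoneOn tan (Ico 0 (π / 2)) :=
  strictMonoOn_tan.monotoneOn.mono fun x hx => ⟨by linarith [hx.1, pi_pos], hx.2⟩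

lemma lower0 (P : PsiA) {v : ℝ → ℝ} (hv : TestFun (-(π / 2)) (π / 2) v) :
    ENNReal.ofReal 2 * (∫⁻ x in Ioo (-(π / 2)) (π / 2), ENNReal.ofReal ((v x) ^ 2)) ≤
      (∫⁻ x in Ioo (-(π / 2)) (π / 2), ENNReal.ofReal ((deriv v x) ^ 2)) +
      ∫⁻ x in Ioo (-(π / 2)) (π / 2), ENNReal.ofReal ((v x) ^ 2) ∂((2 : ℝ≥0∞) • P.sqM) := by
  refine key hv _ (G := fun x => 2 * tan x) (Φ := fun r => 2 * (2 * (tan r - r))) (C := 8)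
    (measurable_tan'.const_mul 2) (by simp)
    (fun x hx y hy hxy => by have := tan_monoOn hx hy hxy; simp only; linarith) ?_ ?_ ?_ ?_
  · intro E hE hEI r hr hvol
    rw [ENNReal.ofReal_mul (by norm_num), Measure.smul_apply, smul_eq_mul, ENNReal.ofReal_ofNat]
    gcongr
    exact P.sq_lower0 hE hEI hr hvol
  · intro r hr
    have h1 := lint_le_of_deriv (f := fun y => (2 * tan y) ^ 2) (D := fun x => 4 * (tan x - x))
      (D' := fun x => 4 * ((1 + tan x ^ 2) - 1)) hr.1
      (fun x hx => ((tan_deriv (cos_ne hr hx)).sub (hasDerivAt_id x)).const_mul 4)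
      (fun x hx => le_of_eq (by ring)) (fun x hx => by positivity)
      (by have := tan_contOn hr; fun_prop)
    have h2 := le_tan hr.1 hr.2
    have h3 := hr.1
    calc _ ≤ ENNReal.ofReal 2 * ENNReal.ofReal (2 * r) +
          2 * ENNReal.ofReal (4 * (tan r - r) - 4 * (tan 0 - 0)) := by gcongr
      _ = _ := by
        rw [← ENNReal.ofReal_ofNat, ← ENNReal.ofReal_mul (by norm_num),
          ← ENNReal.ofReal_mul (by norm_num), tan_zero,
          ← ENNReal.ofReal_add (by linarith) (by linarith),
          ← ENNReal.ofReal_add (by linarith) (by linarith)]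
        congr 1
        ring
  · intro r hr
    have h2 := le_tan hr.1 hr.2
    linarith
  · intro r hr
    have h3 := hr.1
    linarith

lemma lower1 (P : PsiA) {t0 t1 L0 : ℝ} (ht1 : 0 < t1) (ht01 : t1 < t0)
    (hL00 : 0 ≤ L0) (hL0 : volume (P.lev t0) ≤ ENNReal.ofReal L0) (hL1 : L0 < 2 * arctan t1) :
    ∃ δ : ℝ, 0 < δ ∧ ∀ v : ℝ → ℝ, TestFun (-(π / 2)) (π / 2) v →
    ENNReal.ofReal (2 + δ) * (∫⁻ x in Ioo (-(π / 2)) (π / 2), ENNReal.ofReal ((v x) ^ 2)) ≤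
      (∫⁻ x in Ioo (-(π / 2)) (π / 2), ENNReal.ofReal ((deriv v x) ^ 2)) +
      ∫⁻ x in Ioo (-(π / 2)) (π / 2), ENNReal.ofReal ((v x) ^ 2) ∂((2 : ℝ≥0∞) • P.sqM) := by
  have ht0 : 0 < t0 := ht1.trans ht01
  have hpi := pi_pos
  set κ := (2 * arctan t1 - L0) * (2 * t1) * (t0 - t1) with hκ
  have hκ0 : 0 < κ := mul_pos (mul_pos (by linarith) (by linarith)) (by linarith)
  set r0 := arctan t0 with hr0
  have hr00 : 0 < r0 := arctan_pos.2 ht0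
  have hr01 : r0 < π / 2 := arctan_lt_pi_div_two _
  have htr0 : tan r0 = t0 := tan_arctan t0
  set A := 4 * t0 with hA
  have hA0 : 0 < A := by positivity
  set p : ℝ → ℝ := fun x => exp (A * x) - 1 with hp
  have hpmono : Monotone p := fun x y hxy => by
    have : exp (A * x) ≤ exp (A * y) := exp_le_exp.2 (by gcongr)
    simp only [hp]; linarith
  have hp00 : p 0 = 0 := by simp [hp]
  set p0 := p r0 with hp0
  have hp0pos : 0 < p0 := by
    have : 1 < exp (A * r0) := one_lt_exp_iff.2 (by positivity)
    simp only [hp0, hp]; linarith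
  set K := p0 * (4 * t0 + 2 * p0) + p0 ^ 2 with hK
  have hK0 : 0 < K := by positivity
  obtain ⟨ε, hε0, hε1, hε2, hε3⟩ : ∃ ε : ℝ, 0 < ε ∧ ε ≤ 1 ∧ ε * p0 ^ 2 ≤ A / 2 ∧
      ε * (A / 2 + K) * 2 ≤ κ := by
    refine ⟨min 1 (min (A / 2 / p0 ^ 2) (κ / ((A / 2 + K) * 2))), by positivity, min_le_left _ _,
      ?_, ?_⟩
    · rw [← le_div_iff₀ (by positivity)]
      exact (min_le_right _ _).trans (min_le_left _ _)
    · rw [mul_assoc, ← le_div_iff₀ (by positivity)]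
      exact (min_le_right _ _).trans (min_le_right _ _)
  set G1 : ℝ → ℝ := fun x => 2 * tan x + ε * p x with hG1
  set G : ℝ → ℝ := fun x => max (2 * tan x) (G1 (min x r0)) with hG
  have hG1mono : MonotoneOn G1 (Ico 0 (π / 2)) := fun x hx y hy hxy => by
    have h1 := tan_monoOn hx hy hxy
    have h2 := mul_le_mul_of_nonneg_left (hpmono hxy) hε0.le
    simp only [hG1]; linarith
  have htn : ∀ x ∈ Ico 0 (π / 2), 0 ≤ tan x := fun x hx =>
    tan_nonneg_of_nonneg_of_le_pi_div_two hx.1 hx.2.le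
  have hminmem : ∀ x ∈ Ico 0 (π / 2), min x r0 ∈ Ico 0 (π / 2) := fun x hx =>
    ⟨le_min hx.1 hr00.le, (min_le_left _ _).trans_lt hx.2⟩
  have hGle : ∀ x, x ∈ Ico 0 (π / 2) → G1 (min x r0) ≤ 2 * tan x + ε * p0 := fun x hx => by
    have h1 := tan_monoOn (hminmem x hx) hx (min_le_left _ _)
    have h2 := mul_le_mul_of_nonneg_left (hpmono (min_le_right x r0)) hε0.le
    simp only [hG1]; linarith
  have hGsmall : ∀ x, 0 ≤ x → x ≤ r0 → G x = G1 x := fun x h0 hx => by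
    have h1 : 0 ≤ p x := by rw [← hp00]; exact hpmono h0
    have h2 : 0 ≤ ε * p x := by positivity
    simp only [hG]
    rw [min_eq_left hx, max_eq_right]
    simp only [hG1]; linarith
  have hGsq : ∀ x ∈ Ico 0 (π / 2), (G x) ^ 2 ≤ 4 * tan x ^ 2 + ε * K := fun x hx => by
    have hεK : 0 < ε * K := by positivity
    have ht := htn x hx
    rcases le_total (G1 (min x r0)) (2 * tan x) with h | h
    · simp only [hG]
      rw [max_eq_left h]; linarith [mul_pow 2 (tan x) 2]
    · simp only [hG]
      rw [max_eq_right h]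
      have h1 := hGle x hx
      have h2 : G1 (min x r0) ≤ 2 * t0 + ε * p0 := by
        have h1 := tan_monoOn (hminmem x hx) ⟨hr00.le, hr01⟩ (min_le_right _ _)
        have h2 := mul_le_mul_of_nonneg_left (hpmono (min_le_right x r0)) hε0.le
        rw [htr0] at h1
        simp only [hG1]; linarith
      have h3 : 2 * tan x ≤ 2 * t0 + p0 := by
        have : ε * p0 ≤ 1 * p0 := by gcongr
        linarith
      calc (G1 (min x r0)) ^ 2 ≤ (2 * tan x + ε * p0) ^ 2 := by
            gcongr; linarith
        _ = 4 * tan x ^ 2 + ε * (p0 * (2 * (2 * tan x)) + ε * p0 ^ 2) := by ring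
        _ ≤ 4 * tan x ^ 2 + ε * (p0 * (2 * (2 * t0 + p0)) + 1 * p0 ^ 2) := by gcongr
        _ = _ := by rw [hK]; ring
  have hG0 : G 0 = 0 := by
    rw [hGsmall 0 le_rfl hr00.le]; simp [hG1, hp00]
  have hpm : Measurable p := hpmono.measurable
  have hG1m : Measurable G1 := (measurable_tan'.const_mul 2).add (hpm.const_mul ε)
  refine ⟨ε * A / 2, by positivity, fun v hv => ?_⟩
  refine key hv _ (G := G) (Φ := fun r => 2 * (2 * (tan r - r) + if r0 ≤ r then κ else 0))
    (C := 8 + 2 * p0 + 2 * κ)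
    ((measurable_tan'.const_mul 2).max (hG1m.comp (measurable_id.min measurable_const))) hG0
    ?_ ?_ ?_ ?_ ?_
  · intro x hx y hy hxy
    simp only [hG]
    refine max_le_max ?_ (hG1mono (hminmem x hx) (hminmem y hy) (min_le_min_right _ hxy))
    have := tan_monoOn hx hy hxy
    linarith
  · intro E hE hEI r hr hvol
    rw [ENNReal.ofReal_mul (by norm_num), Measure.smul_apply, smul_eq_mul, ENNReal.ofReal_ofNat]
    gcongr
    split_ifs with h
    · exact P.sq_lower1 hE hEI hr hvol ht1 ht01 hL00 hL0 hL1 h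
    · rw [add_zero]
      exact P.sq_lower0 hE hEI hr hvol
  · intro r hr
    have h2 := le_tan hr.1 hr.2
    have h3 := hr.1
    have hδ : 0 < ε * A / 2 := by positivity
    have hGr : 0 ≤ G r := le_trans (by linarith) (le_max_left (2 * tan r) _)
    -- it suffices to bound the integral
    have suff : ∀ X : ℝ, 0 ≤ X → ∫⁻ y in Ioo 0 r, ENNReal.ofReal ((G y) ^ 2) ≤ ENNReal.ofReal X →
        (2 + ε * A / 2) * (2 * r) + 2 * X ≤
          2 * G r + 2 * (2 * (tan r - r) + if r0 ≤ r then κ else 0) →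
        ENNReal.ofReal (2 + ε * A / 2) * ENNReal.ofReal (2 * r) +
          2 * ∫⁻ y in Ioo 0 r, ENNReal.ofReal ((G y) ^ 2) ≤
        ENNReal.ofReal (2 * G r) +
          ENNReal.ofReal (2 * (2 * (tan r - r) + if r0 ≤ r then κ else 0)) := by
      intro X hX0 hX hle
      calc _ ≤ ENNReal.ofReal (2 + ε * A / 2) * ENNReal.ofReal (2 * r) +
            2 * ENNReal.ofReal X := by gcongr
        _ = ENNReal.ofReal ((2 + ε * A / 2) * (2 * r) + 2 * X) := by
          rw [← ENNReal.ofReal_ofNat, ← ENNReal.ofReal_mul (by linarith),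
            ← ENNReal.ofReal_mul (by norm_num), ← ENNReal.ofReal_add (by positivity) (by linarith)]
        _ ≤ _ := by
          rw [← ENNReal.ofReal_add (by linarith) (by split_ifs <;> linarith)]
          exact ENNReal.ofReal_le_ofReal hle
    rcases le_or_gt r0 r with h | h
    · have hεK : 0 < ε * K := by positivity
      have h1 := lint_le_of_deriv (f := fun y => (G y) ^ 2)
        (D := fun x => 4 * (tan x - x) + ε * K * x)
        (D' := fun x => 4 * ((1 + tan x ^ 2) - 1) + ε * K * 1) hr.1
        (fun x hx => (((tan_deriv (cos_ne hr hx)).sub (hasDerivAt_id x)).const_mul 4).add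
          ((hasDerivAt_id x).const_mul _))
        (fun x hx => by have := hGsq x ⟨hx.1, hx.2.trans_lt hr.2⟩; linarith)
        (fun x hx => by positivity)
        (by have := tan_contOn hr; fun_prop)
      simp only [tan_zero] at h1
      refine suff _ ?_ h1 ?_
      · have := mul_nonneg hεK.le h3; linarith
      · rw [if_pos h]
        have h4 : 2 * tan r ≤ G r := le_max_left _ _
        have h5 : r ≤ 2 := by linarith [hr.2, pi_le_four]
        have h6 : ε * (A / 2 + K) * r ≤ ε * (A / 2 + K) * 2 := by gcongr
        linarith
    · have hd : ∀ x ∈ Icc 0 r, HasDerivAt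
          (fun x => 2 * tan x + ε * p x + 2 * (tan x - x) - (2 + ε * A / 2) * x)
          (2 * (1 + tan x ^ 2) + ε * (exp (A * x) * (A * 1)) + 2 * ((1 + tan x ^ 2) - 1) -
            (2 + ε * A / 2) * 1) x := by
        intro x hx
        have ht := tan_deriv (cos_ne hr hx)
        have he : HasDerivAt p (exp (A * x) * (A * 1)) x :=
          (((hasDerivAt_id x).const_mul A).exp).sub_const 1
        exact (((ht.const_mul 2).add (he.const_mul ε)).add
          ((ht.sub (hasDerivAt_id x)).const_mul 2)).sub ((hasDerivAt_id x).const_mul _)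
      have hle : ∀ x ∈ Icc 0 r, (G x) ^ 2 ≤
          2 * (1 + tan x ^ 2) + ε * (exp (A * x) * (A * 1)) + 2 * ((1 + tan x ^ 2) - 1) -
            (2 + ε * A / 2) * 1 := by
        intro x hx
        have hxm : x ∈ Ico 0 (π / 2) := ⟨hx.1, hx.2.trans_lt hr.2⟩
        rw [hGsmall x hx.1 (hx.2.trans h.le)]
        have hpx0 : 0 ≤ p x := by rw [← hp00]; exact hpmono hx.1
        have hpx1 : p x ≤ p0 := hpmono (hx.2.trans h.le)
        have hexp : exp (A * x) = p x + 1 := by simp [hp]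
        have htx : tan x ≤ t0 := by
          rw [← htr0]; exact tan_monoOn hxm ⟨hr00.le, hr01⟩ (hx.2.trans h.le)
        rw [hexp]
        have e1 : ε * (ε * p x ^ 2) ≤ ε * (A / 2) := by
          gcongr
          exact le_trans (by gcongr) hε2
        have e2 : ε * p x * (4 * tan x) ≤ ε * p x * A := by gcongr; linarith
        simp only [hG1]
        linarith
      have h1 := lint_le_of_deriv (f := fun y => (G y) ^ 2) hr.1 hd hle
        (fun x hx => by positivity) (by have := tan_contOn hr; fun_prop)
      have hcont := h1
      simp only [tan_zero, hp00] at h1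
      by_cases hX : 0 ≤ 2 * tan r + ε * p r + 2 * (tan r - r) - (2 + ε * A / 2) * r
      · refine suff _ hX (h1.trans_eq (by congr 1; ring)) ?_
        rw [if_neg (not_le.2 h), hGsmall r h3 h.le]
        simp only [hG1]
        linarith
      · exfalso
        -- the function is nonnegative since its derivative is
        have hmon : MonotoneOn
            (fun x => 2 * tan x + ε * p x + 2 * (tan x - x) - (2 + ε * A / 2) * x) (Icc 0 r) := by
          refine monotoneOn_of_deriv_nonneg (convex_Icc _ _)
            (fun x hx => (hd x hx).continuousAt.continuousWithinAt)
            (fun x hx => (hd x (interior_subset hx)).differentiableAt.differentiableWithinAt) ?_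
          intro x hx
          rw [(hd x (interior_subset hx)).deriv]
          exact le_trans (by positivity) (hle x (interior_subset hx))
        have := hmon ⟨le_rfl, h3⟩ ⟨h3, le_rfl⟩ h3
        simp only [tan_zero, hp00] at this
        linarith
  · intro r hr
    have h2 := le_tan hr.1 hr.2
    split_ifs <;> linarith
  · intro r hr
    have h3 := hr.1
    have ht := htn r hr
    have hεp : ε * p0 ≤ 1 * p0 := by gcongr
    have hGr : G r ≤ 2 * tan r + p0 := max_le (by linarith) (by linarith [hGle r hr])
    have e1 : 0 ≤ p0 * tan r := by positivity
    have e2 : 0 ≤ κ * tan r := by positivity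
    have : (if r0 ≤ r then κ else 0) ≤ κ := by split_ifs <;> linarith
    linarith

lemma PsiA.lev_ordConnected (P : PsiA) (t : ℝ) : (P.lev t).OrdConnected := by
  refine ⟨fun x hx y hy z hz => ?_⟩
  have hzd : z ∈ P.dom := P.domConn.out hx.1 hy.1 hz
  refine ⟨hzd, abs_le.2 ⟨?_, ?_⟩⟩
  · exact le_trans (abs_le.1 hx.2).1 (P.mono hx.1 hzd hz.1)
  · exact le_trans (P.mono hzd hy.1 hz.2) (abs_le.1 hy.2).2

lemma PsiA.lev_ends (P : PsiA)
    (h : ∀ t : ℝ, 0 < t → ENNReal.ofReal (2 * arctan t) ≤ volume (P.lev t)) :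
    ∀ t : ℝ, 0 < t → (P.lev t).Nonempty ∧ BddBelow (P.lev t) ∧ BddAbove (P.lev t) ∧
      sInf (P.lev t) = - arctan t ∧ sSup (P.lev t) = arctan t := by
  have hsub : ∀ t, P.lev t ⊆ Ioo (-(π/2)) (π/2) := fun t x hx => P.domSub hx.1
  have hpos : ∀ t : ℝ, 0 < t → 0 < arctan t := fun t ht => by
    have := Real.arctan_strictMono ht
    rwa [Real.arctan_zero] at this
  have hne : ∀ t : ℝ, 0 < t → (P.lev t).Nonempty := by
    intro t ht
    by_contra hc
    rw [Set.not_nonempty_iff_eq_empty] at hc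
    have h1 := h t ht
    rw [hc, measure_empty, nonpos_iff_eq_zero, ENNReal.ofReal_eq_zero] at h1
    linarith [hpos t ht]
  have hbb : ∀ t, BddBelow (P.lev t) := fun t => ⟨-(π/2), fun x hx => (hsub t hx).1.le⟩
  have hba : ∀ t, BddAbove (P.lev t) := fun t => ⟨(π/2), fun x hx => (hsub t hx).2.le⟩
  have hlen : ∀ t : ℝ, 0 < t → 2 * arctan t ≤ sSup (P.lev t) - sInf (P.lev t) := by
    intro t ht
    have h1 : P.lev t ⊆ Icc (sInf (P.lev t)) (sSup (P.lev t)) :=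
      fun x hx => ⟨csInf_le (hbb t) hx, le_csSup (hba t) hx⟩
    have h2 := (h t ht).trans (measure_mono h1)
    rw [Real.volume_Icc] at h2
    have h3 : 0 ≤ sSup (P.lev t) - sInf (P.lev t) := by
      obtain ⟨x, hx⟩ := hne t ht
      linarith [(h1 hx).1, (h1 hx).2]
    exact (ENNReal.ofReal_le_ofReal_iff h3).1 h2
  have hcross : ∀ t1 t2 : ℝ, 0 < t1 → 0 < t2 →
      sSup (P.lev t1) - sInf (P.lev t2) ≤ 2 * arctan ((t1 + t2) / 2) := by
    intro t1 t2 h1 h2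
    have hc := hpos ((t1+t2)/2) (by linarith)
    have : sSup (P.lev t1) ≤ sInf (P.lev t2) + 2 * arctan ((t1 + t2) / 2) := by
      refine csSup_le (hne t1 h1) fun y hy => ?_
      have : y - 2 * arctan ((t1 + t2) / 2) ≤ sInf (P.lev t2) := by
        refine le_csInf (hne t2 h2) fun x hx => ?_
        rcases le_total x y with hxy | hxy
        · have := P.gap_arctan hx.1 hy.1 hxy (T := (t1+t2)/2)
            (by linarith [(abs_le.1 hy.2).2, (abs_le.1 hx.2).1]) (by linarith)
          linarith
        · linarith
      linarith
    linarith
  have hdiam : ∀ t : ℝ, 0 < t → sSup (P.lev t) - sInf (P.lev t) = 2 * arctan t := by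
    intro t ht
    refine le_antisymm ?_ (hlen t ht)
    have := hcross t t ht ht
    rwa [show (t + t)/2 = t by ring] at this
  set m : ℝ → ℝ := fun t => (sSup (P.lev t) + sInf (P.lev t)) / 2 with hm
  have hmd : ∀ t1 t2 : ℝ, 0 < t1 → 0 < t2 →
      |m t1 - m t2| ≤ 2 * arctan ((t1 + t2)/2) - arctan t1 - arctan t2 := by
    intro t1 t2 h1 h2
    have e1 := hcross t1 t2 h1 h2
    have e2 := hcross t2 t1 h2 h1
    rw [add_comm t2 t1] at e2
    have e3 := hdiam t1 h1
    have e4 := hdiam t2 h2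
    simp only [hm]
    rw [abs_le]
    constructor <;> linarith
  have hder : ∀ t : ℝ, 0 < t → HasDerivAt m 0 t := by
    intro t ht
    have hG : HasDerivAt (fun s : ℝ => 2 * arctan ((s + t)/2) - arctan s - arctan t) 0 t := by
      have i1 : HasDerivAt (fun s : ℝ => (s + t)/2) (1/2) t :=
        ((hasDerivAt_id t).add_const t).div_const 2
      have i2 := ((i1.arctan.const_mul 2).sub (Real.hasDerivAt_arctan t)).sub_const (arctan t)
      refine i2.congr_deriv ?_
      rw [show (t+t)/2 = t by ring]
      ring
    rw [hasDerivAt_iff_isLittleO] at hG ⊢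
    refine Asymptotics.IsBigO.trans_isLittleO ?_ hG
    refine Asymptotics.IsBigO.of_bound 1 ?_
    filter_upwards [lt_mem_nhds ht] with s hs
    have := hmd s t hs ht
    simp only [smul_zero, sub_zero, Real.norm_eq_abs, one_mul]
    refine this.trans ?_
    rw [show (t+t)/2 = t by ring]
    refine le_trans (le_of_eq ?_) (le_abs_self _)
    ring
  have hconst : ∀ t s : ℝ, 0 < t → 0 < s → m t = m s := by
    intro t s ht hs
    exact isOpen_Ioi.is_const_of_deriv_eq_zero (isPreconnected_Ioi (a := (0:ℝ)))
      (fun x hx => (hder x hx).differentiableAt.differentiableWithinAt)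
      (fun x hx => (hder x hx).deriv) ht hs
  have hmb : ∀ t : ℝ, 0 < t → |m t| ≤ π/2 - arctan t := by
    intro t ht
    have e1 : sSup (P.lev t) ≤ π/2 := csSup_le (hne t ht) fun x hx => (hsub t hx).2.le
    have e2 : -(π/2) ≤ sInf (P.lev t) := le_csInf (hne t ht) fun x hx => (hsub t hx).1.le
    have e3 := hdiam t ht
    simp only [hm]
    rw [abs_le]
    constructor <;> linarith
  have hm0 : ∀ t : ℝ, 0 < t → m t = 0 := by
    intro t ht
    have hlim : Tendsto (fun s : ℝ => π/2 - arctan s) atTop (nhds (π/2 - π/2)) :=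
      tendsto_const_nhds.sub (Real.tendsto_arctan_atTop.mono_right nhdsWithin_le_nhds)
    have : |m t| ≤ π/2 - π/2 := by
      refine ge_of_tendsto hlim ?_
      filter_upwards [eventually_gt_atTop 0] with s hs
      rw [hconst t s ht hs]
      exact hmb s hs
    rw [sub_self] at this
    exact abs_eq_zero.1 (le_antisymm this (abs_nonneg _))
  intro t ht
  have e1 := hm0 t ht
  have e2 := hdiam t ht
  simp only [hm] at e1
  exact ⟨hne t ht, hbb t, hba t, by linarith, by linarith⟩

lemma PsiA.rigid (P : PsiA)
    (h : ∀ t : ℝ, 0 < t → ENNReal.ofReal (2 * arctan t) ≤ volume (P.lev t)) :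
    P.dom = Ioo (-(π / 2)) (π / 2) ∧ ∀ x ∈ P.dom, P.psi x = tan x := by
  have he := P.lev_ends h
  have hin : ∀ t : ℝ, 0 < t → ∀ x, -arctan t < x → x < arctan t → x ∈ P.lev t := by
    intro t ht x h1 h2
    obtain ⟨hne, hb, ha, e1, e2⟩ := he t ht
    rw [← e1] at h1
    rw [← e2] at h2
    obtain ⟨y, hy, hy'⟩ := exists_lt_of_csInf_lt hne h1
    obtain ⟨z, hz, hz'⟩ := exists_lt_of_lt_csSup hne h2
    exact (P.lev_ordConnected t).out hy hz ⟨hy'.le, hz'.le⟩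
  have hout : ∀ t : ℝ, 0 < t → ∀ x ∈ P.lev t, -arctan t ≤ x ∧ x ≤ arctan t := by
    intro t ht x hx
    obtain ⟨hne, hb, ha, e1, e2⟩ := he t ht
    exact ⟨e1 ▸ csInf_le hb hx, e2 ▸ le_csSup ha hx⟩
  have hin' : ∀ x ∈ Ioo (-(π/2)) (π/2), ∀ t, |tan x| < t → x ∈ P.lev t := by
    intro x hx t ht
    have h0 : 0 < t := lt_of_le_of_lt (abs_nonneg _) ht
    have hxa : arctan (tan x) = x := Real.arctan_tan hx.1 hx.2
    refine hin t h0 x ?_ ?_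
    · rw [← hxa, ← Real.arctan_neg]
      exact Real.arctan_strictMono (abs_lt.1 ht).1
    · rw [← hxa]
      exact Real.arctan_strictMono (abs_lt.1 ht).2
  have hdom : P.dom = Ioo (-(π / 2)) (π / 2) := by
    refine Subset.antisymm P.domSub fun x hx => ?_
    exact (hin' x hx (|tan x| + 1) (by linarith)).1
  refine ⟨hdom, ?_⟩
  have habs : ∀ x ∈ P.dom, |P.psi x| = |tan x| := by
    intro x hx
    have hx' := P.domSub hx
    have hxa : arctan (tan x) = x := Real.arctan_tan hx'.1 hx'.2
    refine le_antisymm ?_ ?_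
    · refine le_of_forall_gt_imp_ge_of_dense fun t ht => ?_
      exact (hin' x hx' t ht).2
    · refine le_of_forall_lt_imp_le_of_dense fun t ht => ?_
      rcases le_or_gt t 0 with h0 | h0
      · exact h0.trans (abs_nonneg _)
      · by_contra hc
        push Not at hc
        have := hout t h0 x ⟨hx, hc.le⟩
        rw [← hxa, ← Real.arctan_neg] at this
        have : |tan x| ≤ t := abs_le.2 ⟨Real.arctan_strictMono.le_iff_le.1 this.1,
          Real.arctan_strictMono.le_iff_le.1 this.2⟩
        linarith
  have h0d : (0:ℝ) ∈ P.dom := by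
    rw [hdom]; constructor <;> linarith [Real.pi_pos]
  have h00 : P.psi 0 = 0 := by
    have := habs 0 h0d
    rw [Real.tan_zero, abs_zero] at this
    exact abs_eq_zero.1 this
  intro x hx
  have hx' := P.domSub hx
  have := habs x hx
  rcases le_total 0 x with hs | hs
  · have k1 := P.mono h0d hx hs
    rw [h00] at k1
    rwa [abs_of_nonneg k1, abs_of_nonneg (Real.tan_nonneg_of_nonneg_of_le_pi_div_two hs hx'.2.le)] at this
  · have k1 := P.mono hx h0d hs
    rw [h00] at k1
    rw [abs_of_nonpos k1, abs_of_nonpos (Real.tan_nonpos_of_nonpos_of_neg_pi_div_two_le hs hx'.1.le)] at this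
    linarith

/-- clamping to `[-π/2, π/2]` -/
def clampI (x : ℝ) : ℝ := max (-(π/2)) (min x (π/2))

lemma clampI_cont : Continuous clampI := by unfold clampI; fun_prop

lemma clampI_of_mem {x : ℝ} (hx : x ∈ Ioo (-(π/2)) (π/2)) : clampI x = x := by
  unfold clampI
  rw [min_eq_left hx.2.le, max_eq_right hx.1.le]

lemma clampI_of_le {x : ℝ} (hx : x ≤ -(π/2)) : clampI x = -(π/2) := by
  unfold clampI
  rw [min_eq_left (by linarith [pi_pos]), max_eq_left hx]

lemma clampI_of_ge {x : ℝ} (hx : π/2 ≤ x) : clampI x = π/2 := by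
  unfold clampI
  rw [min_eq_right hx, max_eq_right (by linarith [pi_pos])]

lemma cosSq_of_mem {x : ℝ} (hx : x ∈ Ioo (-(π/2)) (π/2)) : cosSq x = cos x ^ 2 := if_pos hx

lemma cosSq_of_not {x : ℝ} (hx : x ∉ Ioo (-(π/2)) (π/2)) : cosSq x = 0 := if_neg hx

lemma cosSq_end {x : ℝ} (hx : cos x = 0) (hn : x ∉ Ioo (-(π/2)) (π/2)) :
    HasDerivAt cosSq 0 x := by
  have hG : HasDerivAt (fun y : ℝ => cos y ^ 2) 0 x := by
    have := (Real.hasDerivAt_cos x).pow 2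
    refine this.congr_deriv ?_
    rw [hx]; simp
  rw [hasDerivAt_iff_isLittleO] at hG ⊢
  refine Asymptotics.IsBigO.trans_isLittleO ?_ hG
  refine Asymptotics.IsBigO.of_bound 1 (Eventually.of_forall fun y => ?_)
  simp only [smul_zero, sub_zero, one_mul, hx, cosSq_of_not hn]
  by_cases hy : y ∈ Ioo (-(π/2)) (π/2)
  · rw [cosSq_of_mem hy]; simp
  · rw [cosSq_of_not hy]; simp; positivity

lemma cosSq_deriv (x : ℝ) : HasDerivAt cosSq (-(2 * cos (clampI x) * sin (clampI x))) x := by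
  by_cases hx : x ∈ Ioo (-(π/2)) (π/2)
  · rw [clampI_of_mem hx]
    have h1 := (Real.hasDerivAt_cos x).pow 2
    refine HasDerivAt.congr_of_eventuallyEq (f := fun y => cos y ^ 2) ?_ ?_
    · refine h1.congr_deriv ?_
      push_cast; ring
    · filter_upwards [isOpen_Ioo.mem_nhds hx] with y hy
      exact cosSq_of_mem hy
  · have hx' := hx
    rw [mem_Ioo, not_and_or, not_lt, not_lt] at hx'
    have hz : -(2 * cos (clampI x) * sin (clampI x)) = 0 := by
      rcases hx' with h | h
      · rw [clampI_of_le h]; simp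
      · rw [clampI_of_ge h]; simp
    rw [hz]
    rcases hx' with h | h
    · rcases h.eq_or_lt with h | h
      · exact cosSq_end (by rw [h]; simp) hx
      · refine (hasDerivAt_const x (0:ℝ)).congr_of_eventuallyEq ?_
        filter_upwards [gt_mem_nhds h] with y hy
        exact cosSq_of_not fun k => absurd k.1 (not_lt.2 hy.le)
    · rcases h.eq_or_lt with h | h
      · exact cosSq_end (by rw [← h]; simp) hx
      · refine (hasDerivAt_const x (0:ℝ)).congr_of_eventuallyEq ?_
        filter_upwards [lt_mem_nhds h] with y hy
        exact cosSq_of_not fun k => absurd k.2 (not_lt.2 hy.le)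

lemma cosSq_testFun : TestFun (-(π/2)) (π/2) cosSq := by
  refine ⟨?_, fun x hx => cosSq_of_not hx⟩
  rw [contDiff_one_iff_deriv]
  refine ⟨fun x => (cosSq_deriv x).differentiableAt, ?_⟩
  have : deriv cosSq = fun x => -(2 * cos (clampI x) * sin (clampI x)) :=
    funext fun x => (cosSq_deriv x).deriv
  rw [this]
  have := clampI_cont
  fun_prop

lemma lint_I {f : ℝ → ℝ} (hf : Continuous f) (h0 : ∀ x, 0 ≤ f x) :
    ∫⁻ x in Ioo (-(π/2)) (π/2), ENNReal.ofReal (f x) =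
      ENNReal.ofReal (∫ x in (-(π/2))..(π/2), f x) := by
  have hle : -(π/2) ≤ π/2 := by linarith [pi_pos]
  rw [intervalIntegral.integral_of_le hle, integral_Ioc_eq_integral_Ioo,
    ofReal_integral_eq_lintegral_ofReal]
  · exact (hf.integrableOn_Icc (a := -(π/2)) (b := π/2)).mono_set Ioo_subset_Icc_self
  · exact Eventually.of_forall h0

lemma int_sc : ∫ x in (-(π/2))..(π/2), sin x ^ 2 * cos x ^ 2 = π / 8 := by
  rw [integral_sin_sq_mul_cos_sq]
  have h1 : sin (4 * (π/2)) = 0 := by rw [show 4 * (π/2) = 2 * π by ring]; simp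
  have h2 : sin (4 * -(π/2)) = 0 := by
    rw [show 4 * -(π/2) = -(2 * π) by ring, sin_neg]; simp
  rw [h1, h2]; ring

lemma int_c4 : ∫ x in (-(π/2))..(π/2), (cos x ^ 2) ^ 2 = 3 * π / 8 := by
  have h : ∀ x : ℝ, (cos x ^ 2) ^ 2 = cos x ^ 2 - sin x ^ 2 * cos x ^ 2 := fun x => by
    have := sin_sq_add_cos_sq x
    have h2 : sin x ^ 2 = 1 - cos x ^ 2 := by linarith
    rw [h2]; ring
  simp_rw [h]
  rw [intervalIntegral.integral_sub, int_sc, integral_cos_sq]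
  · simp; ring
  · exact (by fun_prop : Continuous fun x : ℝ => cos x ^ 2).intervalIntegrable _ _
  · exact (by fun_prop : Continuous fun x : ℝ => sin x ^ 2 * cos x ^ 2).intervalIntegrable _ _

lemma cosSq_den : ∫⁻ x in Ioo (-(π/2)) (π/2), ENNReal.ofReal ((cosSq x) ^ 2) =
    ENNReal.ofReal (3 * π / 8) := by
  rw [← int_c4, ← lint_I (by fun_prop) (fun x => by positivity)]
  refine setLIntegral_congr_fun measurableSet_Ioo fun x hx => ?_
  simp only [cosSq_of_mem hx]

lemma cosSq_num1 : ∫⁻ x in Ioo (-(π/2)) (π/2), ENNReal.ofReal ((deriv cosSq x) ^ 2) =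
    ENNReal.ofReal (4 * (π / 8)) := by
  rw [← int_sc, ← intervalIntegral.integral_const_mul,
    ← lint_I (by fun_prop) (fun x => by positivity)]
  refine setLIntegral_congr_fun measurableSet_Ioo fun x hx => ?_
  simp only [(cosSq_deriv x).deriv, clampI_of_mem hx]
  congr 1; ring

lemma cosSq_num2 (P : PsiA) (hd : P.dom = Ioo (-(π / 2)) (π / 2))
    (hp : ∀ x ∈ P.dom, P.psi x = tan x) :
    ∫⁻ x in Ioo (-(π/2)) (π/2), ENNReal.ofReal ((cosSq x) ^ 2) ∂((2 : ℝ≥0∞) • P.sqM) =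
    2 * ENNReal.ofReal (π / 8) := by
  have hsq : P.sqM = (volume.restrict (Ioo (-(π/2)) (π/2))).withDensity
      (fun x => ENNReal.ofReal ((tan x) ^ 2)) := by
    unfold PsiA.sqM
    rw [hd, sdiff_self]
    simp only [Set.bot_eq_empty, Measure.restrict_empty, smul_zero, add_zero]
    refine withDensity_congr_ae ?_
    filter_upwards [ae_restrict_mem measurableSet_Ioo] with x hx
    rw [hp x (hd ▸ hx)]
  have hmt : Measurable fun x : ℝ => ENNReal.ofReal ((tan x) ^ 2) :=
    (measurable_tan'.pow_const 2).ennreal_ofReal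
  have hmc : Measurable fun x : ℝ => ENNReal.ofReal ((cosSq x) ^ 2) :=
    (cosSq_testFun.1.continuous.measurable.pow_const 2).ennreal_ofReal
  rw [Measure.restrict_smul, lintegral_smul_measure, hsq,
    restrict_withDensity measurableSet_Ioo, Measure.restrict_restrict measurableSet_Ioo,
    inter_self, lintegral_withDensity_eq_lintegral_mul _ hmt hmc, smul_eq_mul]
  congr 1
  rw [← int_sc, ← lint_I (by fun_prop) (fun x => by positivity)]
  refine setLIntegral_congr_fun measurableSet_Ioo fun x hx => ?_
  simp only [Pi.mul_apply, cosSq_of_mem hx]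
  rw [← ENNReal.ofReal_mul (sq_nonneg _)]
  congr 1
  have hc : cos x ≠ 0 := (cos_pos_of_mem_Ioo hx).ne'
  rw [tan_eq_sin_div_cos]
  field_simp

lemma cosSq_dirRQ (P : PsiA) (hd : P.dom = Ioo (-(π / 2)) (π / 2))
    (hp : ∀ x ∈ P.dom, P.psi x = tan x) :
    dirRQ (-(π / 2)) (π / 2) ((2 : ℝ≥0∞) • P.sqM) cosSq = 2 := by
  unfold dirRQ
  rw [cosSq_den, cosSq_num1, cosSq_num2 P hd hp]
  have hpi := pi_pos
  have h2 : (2 : ℝ≥0∞) = ENNReal.ofReal 2 := by simp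
  rw [h2, ← ENNReal.ofReal_mul (by norm_num), ← ENNReal.ofReal_add (by positivity) (by positivity),
    ← ENNReal.ofReal_div_of_pos (by positivity)]
  congr 1
  field_simp
  norm_num

lemma lam1_ge (q : Measure ℝ) (L : ℝ≥0∞)
    (h : ∀ v, TestFun (-(π/2)) (π/2) v →
      L * ∫⁻ x in Ioo (-(π/2)) (π/2), ENNReal.ofReal ((v x)^2) ≤
        (∫⁻ x in Ioo (-(π/2)) (π/2), ENNReal.ofReal ((deriv v x)^2)) +
        ∫⁻ x in Ioo (-(π/2)) (π/2), ENNReal.ofReal ((v x)^2) ∂q) :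
    L ≤ lam1 (-(π/2)) (π/2) q := by
  unfold lam1
  refine le_iInf fun v => le_iInf fun hv => ?_
  unfold dirRQ
  rw [ENNReal.le_div_iff_mul_le (Or.inl hv.2) (Or.inl ?_)]
  · exact h v hv.1
  · have hc := hv.1.1.continuous
    rw [lint_I (f := fun x => v x ^ 2) (by fun_prop) (fun x => by positivity)]
    exact ENNReal.ofReal_ne_top

/-- Proposition 2.3 / `p:prima`: for every `ψ ∈ 𝒜(I_π)` it holds
`λ₁(I_π, 2ψ²) ≥ 2`, with equality if and only if `ψ(x) = tan x` (so that `dom ψ = I_π`);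
in the equality case an eigenfunction is `cos² x`. -/
theorem lower_bound_two_psi_sq (P : PsiA) :
    2 ≤ lam1 (-(π / 2)) (π / 2) ((2 : ℝ≥0∞) • P.sqM) ∧
    (lam1 (-(π / 2)) (π / 2) ((2 : ℝ≥0∞) • P.sqM) = 2 ↔
      (P.dom = Ioo (-(π / 2)) (π / 2) ∧ ∀ x ∈ P.dom, P.psi x = tan x)) ∧
    ((P.dom = Ioo (-(π / 2)) (π / 2) ∧ ∀ x ∈ P.dom, P.psi x = tan x) →
      dirRQ (-(π / 2)) (π / 2) ((2 : ℝ≥0∞) • P.sqM) cosSq = 2) := by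
  have hge : 2 ≤ lam1 (-(π / 2)) (π / 2) ((2 : ℝ≥0∞) • P.sqM) := by
    refine lam1_ge _ _ fun v hv => ?_
    have := lower0 P hv
    rwa [ENNReal.ofReal_ofNat] at this
  refine ⟨hge, ⟨fun heq => P.rigid fun t0 ht0 => ?_, fun h => le_antisymm ?_ hge⟩,
    fun h => cosSq_dirRQ P h.1 h.2⟩
  · by_contra hc
    push Not at hc
    have hfin : volume (P.lev t0) ≠ ∞ := (hc.trans ENNReal.ofReal_lt_top).ne
    have hL : (volume (P.lev t0)).toReal < 2 * arctan t0 :=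
      (ENNReal.lt_ofReal_iff_toReal_lt hfin).1 hc
    have hev : ∀ᶠ s in nhds t0, (volume (P.lev t0)).toReal < 2 * arctan s ∧ 0 < s :=
      ((by fun_prop : Continuous fun s : ℝ => 2 * arctan s).continuousAt.eventually
        (lt_mem_nhds hL)).and (lt_mem_nhds ht0)
    obtain ⟨t1, ⟨h1, h2⟩, h3⟩ :=
      ((hev.filter_mono nhdsWithin_le_nhds).and (self_mem_nhdsWithin (s := Iio t0))).exists
    obtain ⟨δ, hδ, hv⟩ := lower1 P h2 h3 ENNReal.toReal_nonneg
      (ENNReal.ofReal_toReal hfin).ge h1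
    have := lam1_ge _ _ hv
    rw [heq, ← ENNReal.ofReal_ofNat, ENNReal.ofReal_le_ofReal_iff (by norm_num)] at this
    norm_num at this
    linarith
  · have hne : TestFun (-(π / 2)) (π / 2) cosSq ∧
        (∫⁻ x in Ioo (-(π / 2)) (π / 2), ENNReal.ofReal ((cosSq x) ^ 2)) ≠ 0 := by
      refine ⟨cosSq_testFun, ?_⟩
      rw [cosSq_den]
      have := pi_pos
      exact (ENNReal.ofReal_pos.2 (by positivity)).ne'
    exact iInf_le_of_le cosSq (iInf_le_of_le hne (cosSq_dirRQ P h.1 h.2).le)
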